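/- arXiv:2204.08760 — 3 statements merged into one kernel-verified Lean document; each statement's English description precedes it below -/
import Mathlib

section
/- Let q = p^t be a prime power, n > 2, c ∈ GF(q^n) (with c ≠ 1 if p = 2), k ≥ 1, u_1, …, u_k ∈ GF(q^n) nonzero, F : GF(q^n) → GF(q^n) a PcN function with respect to c, and f_1, …, f_k : GF(q^n) → GF(q). Define H(x) = F(x) + Σ_{i=1}^k u_i·f_i(x). Then H is NOT PcN with respect to c if and only if there exist a ∈ GF(q^n), elements x ≠ y in GF(q^n), and ε_1, …, ε_k ∈ {α − c·β : α, β ∈ GF(q)} not all zero, such that (F(x+a) − c·F(x)) − (F(y+a) − c·F(y)) = −Σ_{i=1}^k u_i·ε_i and, for every i with 1 ≤ i ≤ k, (f_i(x+a) − c·f_i(x)) − (f_i(y+a) − c·f_i(y)) = ε_i. -/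
open scoped Classical

/-- The number of solutions `x` of `F(x+a) - c·F(x) = b`. -/
noncomputable def cDeltaCount {K : Type*} [Field K] [Fintype K]
    (c : K) (F : K → K) (a b : K) : ℕ :=
  (Finset.univ.filter fun x => F (x + a) - c * F x = b).card

/-- The `c`-differential uniformity: the maximum of `cDeltaCount` over all `a, b`,
where `a ≠ 0` is required when `c = 1`. -/
noncomputable def cDU {K : Type*} [Field K] [Fintype K] (c : K) (F : K → K) : ℕ :=
  (Finset.univ.filter fun ab : K × K => c = 1 → ab.1 ≠ 0).sup
    fun ab => cDeltaCount c F ab.1 ab.2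

/-- `F` is perfect `c`-nonlinear. -/
def IsPcN {K : Type*} [Field K] [Fintype K] (c : K) (F : K → K) : Prop :=
  cDU c F = 1

/-!
The `c`-derivative is additive in the function and commutes with multiplication by constants, so
the `c`-derivatives of `H = F + ∑ u i * f i` at `x` and `y` agree exactly when those of `F` differ
by `-∑ u i * ε i`, where `ε i` is the corresponding difference for `f i`. If all `ε i` vanish, this
is a collision of a `c`-derivative of `F` itself, which perfect `c`-nonlinearity of `F` forbids.
-/

section CDerivative

/-- The `c`-derivative `x ↦ F (x + a) - c * F x` of `F` at `a`, written `_cD_aF` in the literature.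
Perfect `c`-nonlinearity is injectivity of these maps. -/
def cDerivative {R : Type*} [Add R] [Sub R] [Mul R] (c : R) (F : R → R) (a x : R) : R :=
  F (x + a) - c * F x

theorem cDerivative_add {R : Type*} [NonUnitalNonAssocRing R] (c : R) (F G : R → R) (a x : R) :
    cDerivative c (fun z => F z + G z) a x = cDerivative c F a x + cDerivative c G a x := by
  simp only [cDerivative, mul_add, add_sub_add_comm]

theorem cDerivative_sum_mul {R ι : Type*} [NonUnitalCommRing R] [Fintype ι]
    (c : R) (u : ι → R) (f : ι → R → R) (a x : R) :
    cDerivative c (fun z => ∑ i, u i * f i z) a x = ∑ i, u i * cDerivative c (f i) a x := by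
  simp only [cDerivative, mul_sub, Finset.sum_sub_distrib, Finset.mul_sum, mul_left_comm c]

theorem cDerivative_one_zero {R : Type*} [NonAssocRing R] (F : R → R) (x : R) :
    cDerivative 1 F 0 x = 0 := by
  simp only [cDerivative, add_zero, one_mul, sub_self]

theorem cDerivative_sub_cDerivative {R : Type*} [NonUnitalNonAssocRing R]
    (c : R) (F : R → R) (a x y : R) :
    cDerivative c F a x - cDerivative c F a y =
      (F (x + a) - F (y + a)) - c * (F x - F y) := by
  rw [cDerivative, cDerivative, mul_sub, sub_sub_sub_comm]

theorem cDerivative_add_sum_mul_eq_iff {R ι : Type*} [NonUnitalCommRing R] [Fintype ι]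
    (c : R) (F : R → R) (u : ι → R) (f : ι → R → R) (a x y : R) :
    cDerivative c (fun z => F z + ∑ i, u i * f i z) a x =
        cDerivative c (fun z => F z + ∑ i, u i * f i z) a y ↔
      cDerivative c F a x - cDerivative c F a y =
        -∑ i, u i * (cDerivative c (f i) a x - cDerivative c (f i) a y) := by
  simp only [cDerivative_add, cDerivative_sum_mul, mul_sub, Finset.sum_sub_distrib]
  rw [← sub_eq_zero, add_sub_add_comm, add_eq_zero_iff_eq_neg]

end CDerivative

section PerfectNonlinear

variable {K : Type*} [Field K] [Fintype K] (c : K) (F : K → K)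

theorem forall_cDeltaCount_le_one_iff_injective (a : K) :
    (∀ b, cDeltaCount c F a b ≤ 1) ↔ Function.Injective (cDerivative c F a) := by
  simp only [cDeltaCount, Finset.card_le_one, Finset.mem_filter_univ]
  exact ⟨fun h x y hxy => h _ x hxy y rfl, fun h _ x hx y hy => h (hx.trans hy.symm)⟩

theorem one_le_cDU : 1 ≤ cDU c F := by
  have count_pos : 0 < cDeltaCount c F 1 (cDerivative c F 1 0) :=
    Finset.card_pos.mpr ⟨0, by rw [Finset.mem_filter_univ, cDerivative]⟩
  exact Nat.succ_le_of_lt <| count_pos.trans_le <|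
    Finset.le_sup (f := fun ab : K × K => cDeltaCount c F ab.1 ab.2)
      (b := (1, cDerivative c F 1 0)) (by simp)

theorem isPcN_iff_forall_injective :
    IsPcN c F ↔ ∀ a : K, (c = 1 → a ≠ 0) → Function.Injective (cDerivative c F a) := by
  rw [IsPcN, ← (one_le_cDU c F).ge_iff_eq', cDU, Finset.sup_le_iff]
  simp only [Finset.mem_filter_univ, Prod.forall, ← forall_cDeltaCount_le_one_iff_injective]
  exact forall_congr' fun a => forall_comm

theorem not_isPcN_iff_exists_ne :
    ¬ IsPcN c F ↔ ∃ a x y : K, (c = 1 → a ≠ 0) ∧ x ≠ y ∧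
      cDerivative c F a x = cDerivative c F a y := by
  simp only [isPcN_iff_forall_injective, Function.Injective, not_forall, exists_prop]
  exact exists_congr fun a => by tauto

end PerfectNonlinear

theorem statement1_general {K ι : Type*} [Field K] [Fintype K] [Fintype ι] (A : AddSubgroup K)
    (c : K) (u : ι → K) (F : K → K) (hF : IsPcN c F) (f : ι → K → A) :
    ¬ IsPcN c (fun x => F x + ∑ i, u i * (f i x : K)) ↔
      ∃ (a x y : K) (ε : ι → K), x ≠ y ∧
        (∀ i, ∃ α β : A, ε i = (α : K) - c * (β : K)) ∧
        (∃ i, ε i ≠ 0) ∧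
        cDerivative c F a x - cDerivative c F a y = -(∑ i, u i * ε i) ∧
        (∀ i, cDerivative c (fun z => (f i z : K)) a x -
            cDerivative c (fun z => (f i z : K)) a y = ε i) := by
  simp only [not_isPcN_iff_exists_ne,
    cDerivative_add_sum_mul_eq_iff c F u fun i z => (f i z : K)]
  constructor
  · rintro ⟨a, x, y, ha, hxy, hsub⟩
    refine ⟨a, x, y, _, hxy, fun i => ?_, ?_, hsub, fun _ => rfl⟩
    · exact ⟨f i (x + a) - f i (y + a), f i x - f i y, cDerivative_sub_cDerivative ..⟩
    · by_contra! hε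
      simp only [hε, mul_zero, Finset.sum_const_zero, neg_zero, sub_eq_zero] at hsub
      exact hxy ((isPcN_iff_forall_injective c F).mp hF a ha hsub)
  · rintro ⟨a, x, y, ε, hxy, -, ⟨j, hj⟩, hsub, hε⟩
    refine ⟨a, x, y, ?_, hxy, by simpa only [hε] using hsub⟩
    rintro rfl rfl
    simp only [cDerivative_one_zero, sub_self] at hε
    exact hj (hε j).symm

theorem statement1 (p t n : ℕ) (hp : p.Prime) (ht : 1 ≤ t) (hn : 2 < n)
    (K : Type*) [Field K] [Fintype K] (hK : Nat.card K = (p ^ t) ^ n)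
    (Fq : Subfield K) (hFq : Nat.card Fq = p ^ t)
    (c : K) (hc : p = 2 → c ≠ 1)
    (k : ℕ) (hk : 1 ≤ k)
    (u : Fin k → K) (hu : ∀ i, u i ≠ 0)
    (F : K → K) (hF : IsPcN c F)
    (f : Fin k → K → Fq) :
    ¬ IsPcN c (fun x => F x + ∑ i, u i * (f i x : K)) ↔
      ∃ (a x y : K) (ε : Fin k → K), x ≠ y ∧
        (∀ i, ∃ α β : Fq, ε i = (α : K) - c * (β : K)) ∧
        (∃ i, ε i ≠ 0) ∧
        (F (x + a) - c * F x) - (F (y + a) - c * F y) = -(∑ i, u i * ε i) ∧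
        (∀ i, ((f i (x + a) : K) - c * (f i x : K)) -
            ((f i (y + a) : K) - c * (f i y : K)) = ε i) :=
  statement1_general Fq.toAddSubgroup c u F hF f
end

section
/- Let n ≥ 4 be an even integer, let L : GF(2^n) → GF(2^n) be a bijective F₂-linear map (a 2-linearized permutation polynomial) with L(1) = 1, and let k be an integer with 1 ≤ k ≤ n−1. Define H_k : GF(2^n) → GF(2^n) by H_k(x) = L(x) + Tr_n(x^{2^k+1}), where Tr_n : GF(2^n) → GF(2) is the absolute trace and its value is viewed in GF(2^n). Then H_k is a permutation of GF(2^n) (i.e., PcN for c = 0), and for every c ∈ GF(2^n) \ {1} the c-differential uniformity of H_k is at most 2 (i.e., H_k is either APcN or PcN with respect to c). -/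
open scoped Classical

/-!
In characteristic `p`, write `F = L + T`, where `T` takes values in the prime field and is constant
on its cosets, and `L` is additive, injective and fixes `1`. Then `F` is injective: if `F x = F y`,
then `L (x - y)` lies in the prime field, hence so does `x - y`, so `T x = T y` and `L x = L y`.
Moreover `F (x + a) - F x = L a + (T (x + a) - T x)` takes at most `p` values as `x` varies, and the
equation `F (x + a) - c * F x = b` reads `(1 - c) * F x = b - (F (x + a) - F x)`, so for `c ≠ 1`
each of these values belongs to at most one solution `x`.

For `T x = Tr (x ^ (2 ^ k + 1))` in characteristic `2`, invariance under `x ↦ x + 1` follows from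
`(x + 1) ^ (2 ^ k + 1) = x ^ (2 ^ k + 1) + x ^ 2 ^ k + x + 1`: the two middle terms have the same
trace, and `Tr 1 = n` vanishes for even `n`.
-/

open Finset Function

section AddPerturbation

variable {G : Type*} [AddCommGroup G] {A : AddSubgroup G} {L : G →+ G} {T : G → G}

lemma injective_add_of_comap_le (hL : Injective L) (hLA : A.comap L ≤ A) (hTA : ∀ x, T x ∈ A)
    (hT : ∀ x, ∀ u ∈ A, T (x + u) = T x) : Injective fun x => L x + T x := by
  intro x y (hxy : L x + T x = L y + T y)
  have hL_sub : L (x - y) = T y - T x := by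
    rw [map_sub, sub_eq_sub_iff_add_eq_add, hxy, add_comm]
  have hsub : x - y ∈ A := hLA (by simpa [hL_sub] using A.sub_mem (hTA y) (hTA x))
  have hTxy : T x = T y := by simpa using hT y _ hsub
  exact hL (add_right_cancel (hTxy ▸ hxy))

lemma comap_zmultiples_le_of_map_eq {u : G} (hL : Injective L) (hu : L u = u) :
    (AddSubgroup.zmultiples u).comap L ≤ AddSubgroup.zmultiples u := by
  rintro x ⟨m, hm : m • u = L x⟩
  exact ⟨m, hL (by simpa [hu] using hm)⟩

end AddPerturbation

section Uniformity

variable {K : Type*} [Field K] [Fintype K]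

lemma isPcN_zero_of_injective {F : K → K} (hF : Injective F) : IsPcN 0 F := by
  refine le_antisymm (Finset.sup_le fun ab _ => card_le_one.2 fun x hx y hy => ?_) ?_
  · simp only [mem_filter, mem_univ, true_and, zero_mul, sub_zero] at hx hy
    exact add_right_cancel (hF (hx.trans hy.symm))
  · calc 1 ≤ cDeltaCount 0 F 0 (F 0) := card_pos.2 ⟨0, by simp⟩
      _ ≤ cDU 0 F :=
        Finset.le_sup (f := fun ab : K × K => cDeltaCount 0 F ab.1 ab.2) (b := (0, F 0)) (by simp)

lemma cDeltaCount_le_ncard_of_sub_mem {F : K → K} (hF : Injective F) {c : K} (hc : c ≠ 1)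
    {a : K} {S : Set K} (hS : ∀ x, F (x + a) - F x ∈ S) (b : K) :
    cDeltaCount c F a b ≤ S.ncard := by
  rw [cDeltaCount, ← Set.ncard_coe_finset]
  refine Set.ncard_le_ncard_of_injOn (fun x => F (x + a) - F x) (fun x _ => hS x) ?_
  intro x hx y hy (hxy : F (x + a) - F x = F (y + a) - F y)
  simp only [coe_filter, mem_univ, true_and, Set.mem_ofPred_eq] at hx hy
  apply hF
  apply mul_left_cancel₀ (sub_ne_zero.2 hc.symm)
  linear_combination hx - hy - hxy

lemma cDU_add_le_card {A : AddSubgroup K} {L : K →+ K} {T : K → K}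
    (hinj : Injective fun x => L x + T x) (hTA : ∀ x, T x ∈ A) {c : K} (hc : c ≠ 1) :
    cDU c (fun x => L x + T x) ≤ Nat.card A := by
  refine Finset.sup_le fun ⟨a, b⟩ _ => ?_
  have hdiff (x : K) : L (x + a) + T (x + a) - (L x + T x) ∈ (L a + ·) '' (A : Set K) :=
    ⟨T (x + a) - T x, A.sub_mem (hTA _) (hTA _), by simp only [map_add]; ring⟩
  calc cDeltaCount c (fun x => L x + T x) a b
      ≤ ((L a + ·) '' (A : Set K)).ncard := cDeltaCount_le_ncard_of_sub_mem hinj hc hdiff b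
    _ = Nat.card A := Set.ncard_image_of_injective _ (add_right_injective _)

end Uniformity

section Trace

lemma algebraMap_zmod_mem_zmultiples_one {R : Type*} [Ring R] {m : ℕ} [Algebra (ZMod m) R]
    (t : ZMod m) : algebraMap (ZMod m) R t ∈ AddSubgroup.zmultiples (1 : R) := by
  obtain ⟨j, rfl⟩ := ZMod.intCast_surjective t
  exact ⟨j, by simp⟩

lemma finrank_eq_of_natCard_eq_pow {F V : Type*} [Field F] [Finite F] [AddCommGroup V]
    [Module F V] [Module.Finite F V] {n : ℕ} (hV : Nat.card V = Nat.card F ^ n) :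
    Module.finrank F V = n :=
  Nat.pow_right_injective Finite.one_lt_card (Module.natCard_eq_pow_finrank.symm.trans hV)

lemma trace_pow_card_pow {F K : Type*} [Field F] [Fintype F] [Field K] [Algebra F K]
    [Algebra.IsAlgebraic F K] (k : ℕ) (y : K) :
    Algebra.trace F K (y ^ Fintype.card F ^ k) = Algebra.trace F K y := by
  induction k with
  | zero => simp
  | succ k ih =>
    rw [pow_succ, pow_mul, ← ih]
    exact Algebra.trace_eq_of_algEquiv (FiniteField.frobeniusAlgEquivOfAlgebraic F K) _

lemma periodic_trace_pow_two_pow_add_one {K : Type*} [Field K] [Algebra (ZMod 2) K]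
    [Algebra.IsAlgebraic (ZMod 2) K] (hK : Even (Module.finrank (ZMod 2) K)) (k : ℕ) :
    Periodic (fun x : K => Algebra.trace (ZMod 2) K (x ^ (2 ^ k + 1))) 1 := by
  intro x
  have : CharP K 2 := charP_of_injective_algebraMap (algebraMap (ZMod 2) K).injective 2
  have hexpand : (x + 1) ^ (2 ^ k + 1) = x ^ (2 ^ k + 1) + (x ^ 2 ^ k + x + 1) := by
    rw [pow_succ, add_pow_char_pow, one_pow]
    ring
  have hfrobenius : Algebra.trace (ZMod 2) K (x ^ 2 ^ k) = Algebra.trace (ZMod 2) K x := by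
    simpa only [ZMod.card] using trace_pow_card_pow (F := ZMod 2) k x
  have hone : Algebra.trace (ZMod 2) K 1 = 0 := by
    rw [← map_one (algebraMap (ZMod 2) K), Algebra.trace_algebraMap, nsmul_one,
      CharP.cast_eq_zero_iff (ZMod 2) 2]
    exact hK.two_dvd
  simp only [hexpand, map_add, hfrobenius, hone, CharTwo.add_self_eq_zero, add_zero]

end Trace

theorem statement11_general {K : Type*} [Field K] [Fintype K] (p : ℕ) [CharP K p]
    {L : K →+ K} (hL : Injective L) (hL1 : L 1 = 1) {T : K → K}
    (hTmem : ∀ x, T x ∈ AddSubgroup.zmultiples 1) (hT : Periodic T 1) :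
    IsPcN 0 (fun x => L x + T x) ∧ ∀ c : K, c ≠ 1 → cDU c (fun x => L x + T x) ≤ p := by
  have hTconst : ∀ x, ∀ u ∈ AddSubgroup.zmultiples (1 : K), T (x + u) = T x := by
    rintro x _ ⟨m, rfl⟩
    exact hT.zsmul m x
  have hinj := injective_add_of_comap_le hL (comap_zmultiples_le_of_map_eq hL hL1) hTmem hTconst
  have hcard : Nat.card (AddSubgroup.zmultiples (1 : K)) = p := by
    rw [Nat.card_zmultiples, CharP.eq K (CharP.addOrderOf_one K) ‹CharP K p›]
  exact ⟨isPcN_zero_of_injective hinj, fun c hc => hcard ▸ cDU_add_le_card hinj hTmem hc⟩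

theorem statement11 (n : ℕ) (hn : 4 ≤ n) (hne : Even n)
    (K : Type*) [Field K] [Fintype K] (hK : Nat.card K = 2 ^ n)
    (L : K → K) (hLbij : Function.Bijective L)
    (hLadd : ∀ x y, L (x + y) = L x + L y) (hL1 : L 1 = 1)
    (k : ℕ) (hk : 1 ≤ k) (hk' : k ≤ n - 1) :
    IsPcN (0 : K)
        (fun x => L x + ∑ i ∈ Finset.range n, (x ^ (2 ^ k + 1)) ^ 2 ^ i) ∧
      ∀ c : K, c ≠ 1 →
        cDU c (fun x => L x + ∑ i ∈ Finset.range n, (x ^ (2 ^ k + 1)) ^ 2 ^ i) ≤ 2 := by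
  have : CharP K 2 := charP_of_card_eq_prime_pow (Nat.card_eq_fintype_card.symm.trans hK)
  let := ZMod.algebra K 2
  have hdim : Module.finrank (ZMod 2) K = n :=
    finrank_eq_of_natCard_eq_pow (by rw [hK, Nat.card_zmod])
  have htrace (y : K) :
      ∑ i ∈ range n, y ^ 2 ^ i = algebraMap (ZMod 2) K (Algebra.trace (ZMod 2) K y) := by
    rw [FiniteField.algebraMap_trace_eq_sum_pow, hdim, Nat.card_zmod]
  simp only [htrace]
  exact statement11_general 2 (L := AddMonoidHom.mk' L hLadd) hLbij.injective hL1
    (fun _ => algebraMap_zmod_mem_zmultiples_one _)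
    ((periodic_trace_pow_two_pow_add_one (hdim ▸ hne) k).comp (algebraMap (ZMod 2) K))
end

section
/- Let p be a prime, and let m, n be positive integers with m dividing n and p dividing n/m. Let t ≥ 1 be an integer, u ∈ GF(p^m) nonzero, δ₁, …, δ_t ∈ GF(p^m), and k₁, …, k_t, s₁, …, s_t integers with 1 ≤ k_i, s_i ≤ p^n − 1. Let L : GF(p^n) → GF(p^n) be a bijective F_p-linear map (a linearized permutation polynomial) that maps the subfield GF(p^m) bijectively onto GF(p^m). Then the function H(x) = L(x) + u·Σ_{i=1}^{t} (Tr_{p^n/p^m}(x)^{k_i} + δ_i)^{s_i} on GF(p^n) is PcN with respect to every c ∈ GF(p^m) \ {1}. -/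
open scoped Classical

/-!
On the subfield `F = GF(p^m)` the trace of `GF(p^n)` is multiplication by `n / m`, which vanishes
in characteristic `p`; nothing else about the trace matters. If `x` and `y` are sent to the same
value by `x ↦ H (x + a) - c * H x`, then `(1 - c) * L (x - y)` is a combination over `F` of values
of the non-linear term, which lie in `F`; so `L (x - y) ∈ F`, hence `x - y ∈ F` because `L`
permutes `F`, hence `x` and `y` have the same trace. The non-linear terms of the two values
therefore agree, leaving `(1 - c) * L (x - y) = 0` and `x = y`.
-/

section PerfectNonlinearity

variable {K : Type*} [Field K]

theorem isPcN_of_injective [Fintype K] {c : K} {f : K → K}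
    (hf : ∀ a, (c = 1 → a ≠ 0) → Function.Injective fun x => f (x + a) - c * f x) :
    IsPcN c f := by
  refine le_antisymm (Finset.sup_le fun ab hab => ?_) ?_
  · have hinj := hf ab.1 (Finset.mem_filter.1 hab).2
    refine Finset.card_le_one.2 fun x hx y hy => hinj ?_
    exact (Finset.mem_filter.1 hx).2.trans (Finset.mem_filter.1 hy).2.symm
  · have hadm : ((1 : K), f (0 + 1) - c * f 0) ∈
        Finset.univ.filter fun ab : K × K => c = 1 → ab.1 ≠ 0 := by simp
    have hcount : 1 ≤ cDeltaCount c f 1 (f (0 + 1) - c * f 0) :=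
      Finset.card_pos.2 ⟨0, Finset.mem_filter.2 ⟨Finset.mem_univ _, rfl⟩⟩
    exact hcount.trans
      (Finset.le_sup (f := fun ab : K × K => cDeltaCount c f ab.1 ab.2) hadm)

theorem injective_cDifference_add_comp {F : Subfield K} {A : Type*} [AddZeroClass A]
    {L : K →+ K} {T : K →+ A} {g : A → K} {c : K} (hL : Function.Injective L)
    (hLT : ∀ x, L x ∈ F → T x = 0) (hg : ∀ z, g z ∈ F) (hc : c ∈ F) (hc1 : c ≠ 1) (a : K) :
    Function.Injective fun x => L (x + a) + g (T (x + a)) - c * (L x + g (T x)) := by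
  intro x y hxy
  have hc0 : 1 - c ≠ 0 := sub_ne_zero.2 hc1.symm
  have hdiff : (1 - c) * L (x - y) =
      (g (T (y + a)) - c * g (T y)) - (g (T (x + a)) - c * g (T x)) := by
    simp only [map_add] at hxy
    rw [map_sub, map_add, map_add]
    linear_combination hxy
  have hgF : ∀ z, g (T (z + a)) - c * g (T z) ∈ F := fun z =>
    F.sub_mem (hg _) (F.mul_mem hc (hg _))
  have hLF : L (x - y) ∈ F := by
    rw [eq_div_of_mul_eq hc0 ((mul_comm _ _).trans hdiff)]
    exact F.div_mem (F.sub_mem (hgF y) (hgF x)) (F.sub_mem F.one_mem hc)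
  have hT : T x = T y := by
    simpa [hLT _ hLF] using map_add T (x - y) y
  have hLxy : L (x - y) = 0 := by
    simpa [map_add, hT, hc0] using hdiff
  exact sub_eq_zero.1 ((map_eq_zero_iff L hL).1 hLxy)

end PerfectNonlinearity

section Trace

variable {F K : Type*} [Field F] [Field K] [Finite K] [Algebra F K] {p m n : ℕ}

theorem finrank_eq_div_of_natCard_eq_pow (hp : 2 ≤ p) (hm : 0 < m) (hK : Nat.card K = p ^ n)
    (hF : Nat.card F = p ^ m) : Module.finrank F K = n / m := by
  have hpow : p ^ n = p ^ (m * Module.finrank F K) := by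
    rw [← hK, pow_mul, ← hF, Module.natCard_eq_pow_finrank (K := F)]
  rw [Nat.pow_right_injective hp hpow, Nat.mul_div_cancel_left _ hm]

theorem sum_range_pow_eq_algebraMap_trace (hp : 2 ≤ p) (hm : 0 < m) (hK : Nat.card K = p ^ n)
    (hF : Nat.card F = p ^ m) (x : K) :
    ∑ j ∈ Finset.range (n / m), x ^ (p ^ m) ^ j = algebraMap F K (Algebra.trace F K x) := by
  rw [FiniteField.algebraMap_trace_eq_sum_pow, finrank_eq_div_of_natCard_eq_pow hp hm hK hF, hF]

theorem natCast_finrank_eq_zero (hp : p.Prime) (hm : 0 < m) (hK : Nat.card K = p ^ n)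
    (hF : Nat.card F = p ^ m) (hpn : p ∣ n / m) : (Module.finrank F K : F) = 0 := by
  have : Finite F := .of_injective _ (algebraMap F K).injective
  have := Fintype.ofFinite F
  have := Fact.mk hp
  have : CharP F p := charP_of_card_eq_prime_pow (Nat.card_eq_fintype_card.symm.trans hF)
  rwa [finrank_eq_div_of_natCard_eq_pow hp.two_le hm hK hF, CharP.cast_eq_zero_iff F p]

theorem trace_algebraMap_eq_zero {R S : Type*} [CommRing R] [CommRing S] [Algebra R S]
    [StrongRankCondition R] [Module.Free R S] (h : (Module.finrank R S : R) = 0) (r : R) :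
    Algebra.trace R S (algebraMap R S r) = 0 := by
  rw [Algebra.trace_algebraMap, nsmul_eq_mul, h, zero_mul]

end Trace

theorem statement13_general {K : Type*} [Field K] [Fintype K] {F : Subfield K} {A : Type*}
    [AddZeroClass A] {L : K →+ K} {T : K →+ A} {g : A → K} {c : K} (hL : Function.Injective L)
    (hLT : ∀ x, L x ∈ F → T x = 0) (hg : ∀ z, g z ∈ F) (hc : c ∈ F) (hc1 : c ≠ 1) :
    IsPcN c fun x => L x + g (T x) :=
  isPcN_of_injective fun a _ => injective_cDifference_add_comp hL hLT hg hc hc1 a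

theorem statement13 (p m n : ℕ) (hp : p.Prime) (hm : 0 < m) (hmn : m ∣ n)
    (hpn : p ∣ n / m)
    (K : Type*) [Field K] [Fintype K] (hK : Nat.card K = p ^ n)
    (Fpm : Subfield K) (hFpm : Nat.card Fpm = p ^ m)
    (t : ℕ) (ht : 1 ≤ t)
    (u : K) (huF : u ∈ Fpm) (hu : u ≠ 0)
    (δ : Fin t → K) (hδ : ∀ i, δ i ∈ Fpm)
    (k s : Fin t → ℕ)
    (hk : ∀ i, 1 ≤ k i ∧ k i ≤ p ^ n - 1)
    (hs : ∀ i, 1 ≤ s i ∧ s i ≤ p ^ n - 1)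
    (L : K → K) (hLbij : Function.Bijective L)
    (hLadd : ∀ x y, L (x + y) = L x + L y)
    (hLsub : Set.BijOn L (Fpm : Set K) (Fpm : Set K))
    (c : K) (hc : c ∈ Fpm) (hc1 : c ≠ 1) :
    IsPcN c (fun x => L x + u * ∑ i : Fin t,
      ((∑ j ∈ Finset.range (n / m), x ^ (p ^ m) ^ j) ^ k i + δ i) ^ s i) := by
  simp only [sum_range_pow_eq_algebraMap_trace hp.two_le hm hK hFpm]
  have hLF : ∀ x, L x ∈ Fpm → x ∈ Fpm := fun x hx =>
    hLbij.injective.mem_set_image.1 (hLsub.image_eq.symm ▸ hx)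
  exact statement13_general (L := AddMonoidHom.mk' L hLadd)
    (T := (Algebra.trace Fpm K).toAddMonoidHom)
    (g := fun z => u * ∑ i, ((z : K) ^ k i + δ i) ^ s i) hLbij.injective
    (fun x hx =>
      trace_algebraMap_eq_zero (natCast_finrank_eq_zero hp hm hK hFpm hpn) ⟨x, hLF x hx⟩)
    (fun z => Fpm.mul_mem huF (Fpm.sum_mem fun i _ =>
      Fpm.pow_mem (Fpm.add_mem (Fpm.pow_mem z.2 _) (hδ i)) _)) hc hc1
end
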